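/- Assume a (σ,τ)-Pultr template with P = Š_1 the σ-tree with ar(Š) vertices related by a single Š-edge (for a fixed σ-symbol Š) and each Q_R a σ-tree, let Γ be its central Pultr functor, and let Ω be the construction described in the context. Then for every σ-structure A and every τ-structure B, there is a homomorphism Γ(A) → B if and only if there is a homomorphism A → Ω(B). -/

import Mathlib

/-!
The adjunction comes from recording the values of a map along all homomorphisms from trees.

Given `f : Γ(A) → B`, a vertex `a` of `A` is sent to the tuple whose entry at a V-term `t` is the
set of all composites `f ∘ Γ(h)`, where `h : T(t) → A` is a homomorphism mapping the root to `a`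
(`omegaPoint`).  If `(a_1, …, a_k)` is an edge of `A`, homomorphisms `h_i : T(t_i) → A` with
`h_i(root) = a_i` glue to a homomorphism on `T(edge_S(t_1, …, t_k))` (`isHom_glue`), so that every
member of `⨉_t` is again of the form `f ∘ Γ(h)`; for an `Š`-edge `e` the witness is `f(e)`.

Conversely, given a homomorphism `φ : A → Ω(B)`, let `f` send each `Š`-edge of `A` to a witness for
its image.  By induction on the term `t`, the map `f ∘ Γ(h)` lies in `φ(h(root))_t` for every
homomorphism `h : T(t) → A` (`comp_mem`, with inductive step `comp_edge`).  In particular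
`f ∘ Γ(h)` is a homomorphism for every `h : Q_R → A`, and evaluating it on the tuple of the selected
edges `x R i` of `Q_R` shows that `f` preserves `R`.
-/

/-- A relational signature: a type of relation symbols, each with a positive arity. -/
structure Signature : Type 1 where
  symb : Type
  ar : symb → ℕ
  ar_pos : ∀ R, 0 < ar R

/-- A relational structure over the signature `σ`. -/
structure Struct (σ : Signature) : Type 1 where
  dom : Type
  rel : ∀ R : σ.symb, Set (Fin (σ.ar R) → dom)

variable {σ τ υ : Signature}

/-- `f` is a homomorphism of `σ`-structures from `A` to `B`. -/
def IsHom (A B : Struct σ) (f : A.dom → B.dom) : Prop :=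
  ∀ R : σ.symb, ∀ x ∈ A.rel R, (fun i => f (x i)) ∈ B.rel R

/-- `A → B`: there exists a homomorphism from `A` to `B`. -/
def HomEx (A B : Struct σ) : Prop := ∃ f, IsHom A B f

/-- Terms over `σ` whose denotation is a tree rooted in a vertex: `vertex` is a V-term, and
`pr R i ts` denotes the V-term `pr_i(edge_R(ts))`.  (An R-term `edge_R(t_1, …, t_k)` is
represented by the symbol `R` together with the tuple `ts` of V-terms.) -/
inductive VTerm (σ : Signature) : Type
  | vertex : VTerm σ
  | pr (R : σ.symb) (i : Fin (σ.ar R)) (ts : Fin (σ.ar R) → VTerm σ) : VTerm σ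

/-- The domain of the tree denoted by a V-term. -/
def VTerm.domType : VTerm σ → Type
  | .vertex => PUnit
  | .pr R _ ts => (i : Fin (σ.ar R)) × (ts i).domType

/-- The root of the tree denoted by a V-term. -/
def VTerm.root : (t : VTerm σ) → t.domType
  | .vertex => PUnit.unit
  | .pr _ i ts => ⟨i, (ts i).root⟩

/-- The domain of the tree denoted by the R-term `edge_R(ts)`: the disjoint union of the
domains of the subtrees. -/
def edgeDom (R : σ.symb) (ts : Fin (σ.ar R) → VTerm σ) : Type :=
  (i : Fin (σ.ar R)) × (ts i).domType

/-- The root edge of the tree denoted by the R-term `edge_R(ts)`. -/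
def edgeRoot (R : σ.symb) (ts : Fin (σ.ar R) → VTerm σ) : Fin (σ.ar R) → edgeDom R ts :=
  fun i => ⟨i, (ts i).root⟩

/-- The relations of the tree denoted by a V-term: the relations of the disjoint subtrees,
together with the root edge. -/
def VTerm.rel : (t : VTerm σ) → ∀ S : σ.symb, Set (Fin (σ.ar S) → t.domType)
  | .vertex, _ => ∅
  | .pr R _ ts, S =>
      {x | ∃ i : Fin (σ.ar R), ∃ y ∈ (ts i).rel S, x = fun j => ⟨i, y j⟩} ∪
      {x | ∃ h : R = S, x = fun j => edgeRoot R ts (Fin.cast (congrArg σ.ar h.symm) j)}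

/-- The tree `T(t)` denoted by a V-term `t`. -/
def VTerm.tree (t : VTerm σ) : Struct σ := ⟨t.domType, t.rel⟩

/-- The tree `T(t)` denoted by the R-term `t = edge_R(ts)`. -/
def ETerm.tree (R : σ.symb) (ts : Fin (σ.ar R) → VTerm σ) : Struct σ where
  dom := edgeDom R ts
  rel S :=
    {x | ∃ i : Fin (σ.ar R), ∃ y ∈ (ts i).rel S, x = fun j => ⟨i, y j⟩} ∪
    {x | ∃ h : R = S, x = fun j => edgeRoot R ts (Fin.cast (congrArg σ.ar h.symm) j)}

/-- The V-subterms of a V-term. -/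
def VTerm.vsub : VTerm σ → Set (VTerm σ)
  | .vertex => {.vertex}
  | .pr R i ts => insert (.pr R i ts) (⋃ j, (ts j).vsub)

/-- The S-subterms of a V-term, for each `σ`-symbol `S` (an S-term `edge_S(us)` being
represented by the tuple `us`). -/
def VTerm.esub : VTerm σ → ∀ S : σ.symb, Set (Fin (σ.ar S) → VTerm σ)
  | .vertex, _ => ∅
  | .pr R _ ts, S =>
      {us | ∃ h : R = S, us = fun j => ts (Fin.cast (congrArg σ.ar h.symm) j)} ∪
      {us | ∃ j, us ∈ (ts j).esub S}

/-- A term is either a V-term or an R-term `edge_R(ts)` for some symbol `R`. -/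
def Term (σ : Signature) : Type := VTerm σ ⊕ (Σ S : σ.symb, Fin (σ.ar S) → VTerm σ)

/-- The tree denoted by a term. -/
def Term.tree : Term σ → Struct σ
  | .inl t => t.tree
  | .inr ⟨S, ts⟩ => ETerm.tree S ts

/-- The V-subterms of a term. -/
def Term.vsub : Term σ → Set (VTerm σ)
  | .inl t => t.vsub
  | .inr ⟨_, ts⟩ => ⋃ j, (ts j).vsub

/-- The S-subterms of a term. -/
def Term.esub : Term σ → ∀ S : σ.symb, Set (Fin (σ.ar S) → VTerm σ)
  | .inl t => t.esub
  | .inr ⟨R, ts⟩ => fun S =>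
      {us | ∃ h : R = S, us = fun j => ts (Fin.cast (congrArg σ.ar h.symm) j)} ∪
      {us | ∃ j, us ∈ (ts j).esub S}

/-- `𝒯_V`: all V-subterms of the chosen terms `t_R`. -/
def TVs (tq : τ.symb → Term σ) : Set (VTerm σ) := ⋃ R, (tq R).vsub

/-- `𝒯_S`: all S-subterms of the chosen terms `t_R`. -/
def TEs (tq : τ.symb → Term σ) (S : σ.symb) : Set (Fin (σ.ar S) → VTerm σ) := ⋃ R, (tq R).esub S

/-- The central Pultr functor for the template where `P = Š₁` consists of a single `Š`-edge
(`Š = Sc`), `Q_R = T(tq R)`, and `ε_{i,R}` selects the `Š`-edge `x R i` of `Q_R`. -/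
def GammaE (Sc : σ.symb) (tq : τ.symb → Term σ)
    (x : ∀ R : τ.symb, Fin (τ.ar R) → (Fin (σ.ar Sc) → ((tq R).tree).dom))
    (A : Struct σ) : Struct τ where
  dom := {e : Fin (σ.ar Sc) → A.dom // e ∈ A.rel Sc}
  rel R := {y | ∃ h : ((tq R).tree).dom → A.dom, IsHom ((tq R).tree) A h ∧
      ∀ i, (y i).1 = fun j => h (x R i j)}

/-- Domain of `Ω(B)`: tuples of sets of homomorphisms `Γ(T(t)) → B`, indexed by `t ∈ 𝒯_V`,
whose entry at `vertex` is `{∅}` (the set containing the empty map, i.e. the full set of maps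
from the empty domain of `Γ(T(vertex))`). -/
def OmEDom (Sc : σ.symb) (tq : τ.symb → Term σ)
    (x : ∀ R : τ.symb, Fin (τ.ar R) → (Fin (σ.ar Sc) → ((tq R).tree).dom))
    (B : Struct τ) : Type :=
  {U : (t : {t : VTerm σ // t ∈ TVs tq}) → Set ((GammaE Sc tq x t.1.tree).dom → B.dom) //
    (∀ t, ∀ f ∈ U t, IsHom (GammaE Sc tq x t.1.tree) B f) ∧
    (∀ h : VTerm.vertex ∈ TVs tq, U ⟨.vertex, h⟩ = Set.univ)}

open Classical in
/-- The entry of `U` at the V-term `t` (by convention `∅` if `t ∉ 𝒯_V`). -/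
noncomputable def UextE (Sc : σ.symb) (tq : τ.symb → Term σ)
    (x : ∀ R : τ.symb, Fin (τ.ar R) → (Fin (σ.ar Sc) → ((tq R).tree).dom))
    (B : Struct τ) (U : OmEDom Sc tq x B) (t : VTerm σ) :
    Set ((GammaE Sc tq x t.tree).dom → B.dom) :=
  if h : t ∈ TVs tq then U.1 ⟨t, h⟩ else ∅

/-- Restriction of a map defined on the `Š`-edges of `T(edge_S(ts))` to the `Š`-edges of the
`i`-th subtree. -/
def restrE (Sc : σ.symb) (tq : τ.symb → Term σ)
    (x : ∀ R : τ.symb, Fin (τ.ar R) → (Fin (σ.ar Sc) → ((tq R).tree).dom))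
    (B : Struct τ) (S : σ.symb) (ts : Fin (σ.ar S) → VTerm σ) (i : Fin (σ.ar S))
    (g : (GammaE Sc tq x (ETerm.tree S ts)).dom → B.dom) :
    (GammaE Sc tq x (ts i).tree).dom → B.dom :=
  fun y => g ⟨fun j => ⟨i, y.1 j⟩, Or.inl ⟨i, y.1, y.2, rfl⟩⟩

/-- `⨉_t(Us) = {f₁ ∪ ⋯ ∪ f_k : f_i ∈ (Us i)_{ts i}}` for the S-term `t = edge_S(ts)` with
`S ≠ Š`: maps on the `Š`-edges of `T(t)` all of whose restrictions lie in the prescribed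
sets. -/
def timesNE (Sc : σ.symb) (tq : τ.symb → Term σ)
    (x : ∀ R : τ.symb, Fin (τ.ar R) → (Fin (σ.ar Sc) → ((tq R).tree).dom))
    (B : Struct τ) (S : σ.symb) (ts : Fin (σ.ar S) → VTerm σ)
    (Us : Fin (σ.ar S) → OmEDom Sc tq x B) :
    Set ((GammaE Sc tq x (ETerm.tree S ts)).dom → B.dom) :=
  {g | ∀ i, restrE Sc tq x B S ts i g ∈ UextE Sc tq x B (Us i) (ts i)}

theorem rootEdgeMem (Sc : σ.symb) (ts : Fin (σ.ar Sc) → VTerm σ) :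
    edgeRoot Sc ts ∈ (ETerm.tree Sc ts).rel Sc :=
  Or.inr ⟨rfl, rfl⟩

/-- `⨉_t(Us; e) = {f₁ ∪ ⋯ ∪ f_k ∪ (r_t ↦ e) : f_i ∈ (Us i)_{ts i}}` for the `Š`-term
`t = edge_Š(ts)` with witness `e`. -/
def timesW (Sc : σ.symb) (tq : τ.symb → Term σ)
    (x : ∀ R : τ.symb, Fin (τ.ar R) → (Fin (σ.ar Sc) → ((tq R).tree).dom))
    (B : Struct τ) (ts : Fin (σ.ar Sc) → VTerm σ)
    (Us : Fin (σ.ar Sc) → OmEDom Sc tq x B) (e : B.dom) :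
    Set ((GammaE Sc tq x (ETerm.tree Sc ts)).dom → B.dom) :=
  {g | (∀ i, restrE Sc tq x B Sc ts i g ∈ UextE Sc tq x B (Us i) (ts i)) ∧
       g ⟨edgeRoot Sc ts, rootEdgeMem Sc ts⟩ = e}

/-- `e ∈ B` is a witness for the tuple `Us` of elements of `Ω(B)`: conditions (B1) and (B2). -/
def IsWitness (Sc : σ.symb) (tq : τ.symb → Term σ)
    (x : ∀ R : τ.symb, Fin (τ.ar R) → (Fin (σ.ar Sc) → ((tq R).tree).dom))
    (B : Struct τ) (Us : Fin (σ.ar Sc) → OmEDom Sc tq x B) (e : B.dom) : Prop :=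
  ∀ ts ∈ TEs tq Sc,
    (∀ i : Fin (σ.ar Sc), VTerm.pr Sc i ts ∈ TVs tq →
        ∀ g ∈ timesW Sc tq x B ts Us e, g ∈ UextE Sc tq x B (Us i) (.pr Sc i ts)) ∧
    (∀ g ∈ timesW Sc tq x B ts Us e, IsHom (GammaE Sc tq x (ETerm.tree Sc ts)) B g)

/-- The right adjoint `Ω` for the template with `P = Š₁`. -/
noncomputable def OmegaE (Sc : σ.symb) (tq : τ.symb → Term σ)
    (x : ∀ R : τ.symb, Fin (τ.ar R) → (Fin (σ.ar Sc) → ((tq R).tree).dom))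
    (B : Struct τ) : Struct σ where
  dom := OmEDom Sc tq x B
  rel S := {Us |
    (S ≠ Sc →
      (∀ ts ∈ TEs tq S, ∀ i : Fin (σ.ar S), VTerm.pr S i ts ∈ TVs tq →
          ∀ g ∈ timesNE Sc tq x B S ts Us, g ∈ UextE Sc tq x B (Us i) (.pr S i ts)) ∧
      (∀ ts ∈ TEs tq S, ∀ g ∈ timesNE Sc tq x B S ts Us,
          IsHom (GammaE Sc tq x (ETerm.tree S ts)) B g)) ∧
    (∀ heq : S = Sc, ∃ e : B.dom,
        IsWitness Sc tq x B (fun j => Us (Fin.cast (congrArg σ.ar heq.symm) j)) e)}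

/-- The action `Γ(h)` of the central Pultr functor on a homomorphism `h`: the coordinatewise image
of `Š`-edges. -/
def gammaMap (Sc : σ.symb) (tq : τ.symb → Term σ)
    (x : ∀ R : τ.symb, Fin (τ.ar R) → (Fin (σ.ar Sc) → ((tq R).tree).dom))
    {C A : Struct σ} (h : C.dom → A.dom) (hh : IsHom C A h) :
    (GammaE Sc tq x C).dom → (GammaE Sc tq x A).dom :=
  fun e => ⟨fun j => h (e.1 j), hh Sc e.1 e.2⟩

theorem isHom_gammaMap (Sc : σ.symb) (tq : τ.symb → Term σ)
    (x : ∀ R : τ.symb, Fin (τ.ar R) → (Fin (σ.ar Sc) → ((tq R).tree).dom))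
    {C A : Struct σ} (h : C.dom → A.dom) (hh : IsHom C A h) :
    IsHom (GammaE Sc tq x C) (GammaE Sc tq x A) (gammaMap Sc tq x h hh) := by
  rintro R y ⟨k, hk, hy⟩
  refine ⟨fun v => h (k v), fun S z hz => hh S _ (hk S z hz), fun i => ?_⟩
  funext j
  exact congrArg h (congrFun (hy i) j)

theorem isHom_comp_gammaMap (Sc : σ.symb) (tq : τ.symb → Term σ)
    (x : ∀ R : τ.symb, Fin (τ.ar R) → (Fin (σ.ar Sc) → ((tq R).tree).dom))
    {C A : Struct σ} {B : Struct τ} (h : C.dom → A.dom) (hh : IsHom C A h)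
    (f : (GammaE Sc tq x A).dom → B.dom) (hf : IsHom (GammaE Sc tq x A) B f) :
    IsHom (GammaE Sc tq x C) B (fun e => f (gammaMap Sc tq x h hh e)) :=
  fun R y hy => hf R _ (isHom_gammaMap Sc tq x h hh R y hy)

theorem isHom_branch {A : Struct σ} (S : σ.symb) (ts : Fin (σ.ar S) → VTerm σ)
    (h : (ETerm.tree S ts).dom → A.dom) (hh : IsHom (ETerm.tree S ts) A h) (i : Fin (σ.ar S)) :
    IsHom (ts i).tree A (fun v => h ⟨i, v⟩) :=
  fun R y hy => hh R _ (Or.inl ⟨i, y, hy, rfl⟩)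

/-- Homomorphisms from the branches of `T(edge_S(ts))` glue as soon as the images of the roots form
an `S`-edge. -/
theorem isHom_glue {A : Struct σ} (S : σ.symb) (ts : Fin (σ.ar S) → VTerm σ)
    (h : ∀ i, (ts i).domType → A.dom) (hh : ∀ i, IsHom (ts i).tree A (h i))
    (hroot : (fun i => h i (ts i).root) ∈ A.rel S) :
    IsHom (ETerm.tree S ts) A (fun v => h v.1 v.2) := by
  rintro R y (⟨i, z, hz, rfl⟩ | ⟨rfl, rfl⟩)
  · exact hh i R z hz
  · exact hroot

theorem UextE_of_mem (Sc : σ.symb) (tq : τ.symb → Term σ)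
    (x : ∀ R : τ.symb, Fin (τ.ar R) → (Fin (σ.ar Sc) → ((tq R).tree).dom))
    (B : Struct τ) (U : OmEDom Sc tq x B) (t : VTerm σ) (ht : t ∈ TVs tq) :
    UextE Sc tq x B U t = U.1 ⟨t, ht⟩ :=
  dif_pos ht

theorem isHom_of_mem_UextE (Sc : σ.symb) (tq : τ.symb → Term σ)
    (x : ∀ R : τ.symb, Fin (τ.ar R) → (Fin (σ.ar Sc) → ((tq R).tree).dom))
    (B : Struct τ) (U : OmEDom Sc tq x B) (t : VTerm σ) (f : (GammaE Sc tq x t.tree).dom → B.dom)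
    (hf : f ∈ UextE Sc tq x B U t) : IsHom (GammaE Sc tq x t.tree) B f := by
  by_cases ht : t ∈ TVs tq
  · rw [UextE_of_mem Sc tq x B U t ht] at hf
    exact U.2.1 ⟨t, ht⟩ f hf
  · rw [UextE, dif_neg ht] at hf
    exact hf.elim

/-! ### From `Γ(A) → B` to `A → Ω(B)` -/

/-- The image in `Ω(B)` of a vertex `a` of `A` under the transpose of `f : Γ(A) → B`: its entry at
`t` consists of all `f ∘ Γ(h)` with `h : T(t) → A` a homomorphism sending the root to `a`. -/
def omegaPoint (Sc : σ.symb) (tq : τ.symb → Term σ)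
    (x : ∀ R : τ.symb, Fin (τ.ar R) → (Fin (σ.ar Sc) → ((tq R).tree).dom))
    {A : Struct σ} {B : Struct τ} (f : (GammaE Sc tq x A).dom → B.dom)
    (hf : IsHom (GammaE Sc tq x A) B f) (a : A.dom) : OmEDom Sc tq x B :=
  ⟨fun t => {g | ∃ (h : t.1.domType → A.dom) (hh : IsHom t.1.tree A h), h t.1.root = a ∧
      g = fun e => f (gammaMap Sc tq x h hh e)}, by
    refine ⟨?_, ?_⟩
    · rintro t g ⟨h, hh, -, rfl⟩
      exact isHom_comp_gammaMap Sc tq x (C := t.1.tree) h hh f hf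
    · intro hv
      refine Set.eq_univ_of_forall fun g => ⟨fun _ => a, fun R y hy => hy.elim, rfl, ?_⟩
      -- `T(vertex)` has no `Š`-edges, so there is only one map `g`.
      funext e
      exact e.2.elim⟩

theorem exists_of_mem_omegaPoint (Sc : σ.symb) (tq : τ.symb → Term σ)
    (x : ∀ R : τ.symb, Fin (τ.ar R) → (Fin (σ.ar Sc) → ((tq R).tree).dom))
    {A : Struct σ} {B : Struct τ} (f : (GammaE Sc tq x A).dom → B.dom)
    (hf : IsHom (GammaE Sc tq x A) B f) (a : A.dom) (t : VTerm σ)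
    (g : (GammaE Sc tq x t.tree).dom → B.dom)
    (hg : g ∈ UextE Sc tq x B (omegaPoint Sc tq x f hf a) t) :
    ∃ (h : t.domType → A.dom) (hh : IsHom t.tree A h), h t.root = a ∧
      g = fun e => f (gammaMap Sc tq x h hh e) := by
  by_cases ht : t ∈ TVs tq
  · rw [UextE_of_mem Sc tq x B _ t ht] at hg
    exact hg
  · rw [UextE, dif_neg ht] at hg
    exact hg.elim

/-- If all restrictions of `g` to the branches of `T(edge_S(ts))` lie in the sets attached to the
endpoints of the edge `a` of `A`, and (in case `S = Š`) `g` agrees on the root edge with `f ∘ Γ(h)`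
for all homomorphisms `h` sending the root edge to `a`, then `g = f ∘ Γ(h)` for one such `h`. -/
theorem exists_glued (Sc : σ.symb) (tq : τ.symb → Term σ)
    (x : ∀ R : τ.symb, Fin (τ.ar R) → (Fin (σ.ar Sc) → ((tq R).tree).dom))
    {A : Struct σ} {B : Struct τ} (f : (GammaE Sc tq x A).dom → B.dom)
    (hf : IsHom (GammaE Sc tq x A) B f) (S : σ.symb) (ts : Fin (σ.ar S) → VTerm σ)
    (a : Fin (σ.ar S) → A.dom) (ha : a ∈ A.rel S)
    (g : (GammaE Sc tq x (ETerm.tree S ts)).dom → B.dom)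
    (hg : ∀ i, restrE Sc tq x B S ts i g ∈
      UextE Sc tq x B (omegaPoint Sc tq x f hf (a i)) (ts i))
    (hroot : ∀ (e : (GammaE Sc tq x (ETerm.tree S ts)).dom)
      (h : (ETerm.tree S ts).dom → A.dom) (hh : IsHom (ETerm.tree S ts) A h),
      (∀ i, h (edgeRoot S ts i) = a i) →
      (∃ hS : S = Sc, e.1 = fun j => edgeRoot S ts (Fin.cast (congrArg σ.ar hS.symm) j)) →
      g e = f (gammaMap Sc tq x h hh e)) :
    ∃ (h : (ETerm.tree S ts).dom → A.dom) (hh : IsHom (ETerm.tree S ts) A h),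
      (∀ i, h (edgeRoot S ts i) = a i) ∧ g = fun e => f (gammaMap Sc tq x h hh e) := by
  choose h hh hr hgh using fun i => exists_of_mem_omegaPoint Sc tq x f hf (a i) (ts i) _ (hg i)
  have hedge : (fun i => h i (ts i).root) ∈ A.rel S := by
    rw [show (fun i => h i (ts i).root) = a from funext hr]
    exact ha
  refine ⟨fun v => h v.1 v.2, isHom_glue S ts h hh hedge, hr, ?_⟩
  funext e
  obtain ⟨e, he⟩ := e
  have he' := he
  rcases he' with ⟨i, y, hy, rfl⟩ | hS
  · exact congrFun (hgh i) ⟨y, hy⟩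
  · exact hroot ⟨e, he⟩ _ _ hr hS

theorem isHom_omegaPoint (Sc : σ.symb) (tq : τ.symb → Term σ)
    (x : ∀ R : τ.symb, Fin (τ.ar R) → (Fin (σ.ar Sc) → ((tq R).tree).dom))
    {A : Struct σ} {B : Struct τ} (f : (GammaE Sc tq x A).dom → B.dom)
    (hf : IsHom (GammaE Sc tq x A) B f) :
    IsHom A (OmegaE Sc tq x B) (omegaPoint Sc tq x f hf) := by
  intro S a ha
  refine ⟨fun hS => ?_, ?_⟩
  · have key : ∀ ts : Fin (σ.ar S) → VTerm σ,
        ∀ g ∈ timesNE Sc tq x B S ts (fun i => omegaPoint Sc tq x f hf (a i)),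
        ∃ (h : (ETerm.tree S ts).dom → A.dom) (hh : IsHom (ETerm.tree S ts) A h),
          (∀ i, h (edgeRoot S ts i) = a i) ∧ g = fun e => f (gammaMap Sc tq x h hh e) :=
      fun ts g hg => exists_glued Sc tq x f hf S ts a ha g hg
        fun e h hh hr hE => (hS hE.1).elim
    refine ⟨fun ts _ i hi g hg => ?_, fun ts _ g hg => ?_⟩
    · obtain ⟨h, hh, hr, hgh⟩ := key ts g hg
      rw [UextE_of_mem Sc tq x B _ _ hi]
      exact ⟨h, hh, hr i, hgh⟩
    · obtain ⟨h, hh, hr, rfl⟩ := key ts g hg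
      exact isHom_comp_gammaMap Sc tq x h hh f hf
  · rintro rfl
    have key : ∀ ts : Fin (σ.ar S) → VTerm σ,
        ∀ g ∈ timesW S tq x B ts (fun i => omegaPoint S tq x f hf (a i)) (f ⟨a, ha⟩),
        ∃ (h : (ETerm.tree S ts).dom → A.dom) (hh : IsHom (ETerm.tree S ts) A h),
          (∀ i, h (edgeRoot S ts i) = a i) ∧ g = fun e => f (gammaMap S tq x h hh e) := by
      intro ts g hg
      refine exists_glued S tq x f hf S ts a ha g hg.1 ?_
      rintro ⟨e, he⟩ h hh hr ⟨-, rfl⟩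
      refine hg.2.trans (congrArg f (Subtype.ext ?_))
      exact (funext hr).symm
    refine ⟨f ⟨a, ha⟩, fun ts _ => ⟨fun i hi g hg => ?_, fun g hg => ?_⟩⟩
    · obtain ⟨h, hh, hr, hgh⟩ := key ts g hg
      rw [UextE_of_mem S tq x B _ _ hi]
      exact ⟨h, hh, hr i, hgh⟩
    · obtain ⟨h, hh, hr, rfl⟩ := key ts g hg
      exact isHom_comp_gammaMap S tq x h hh f hf

/-! ### From `A → Ω(B)` to `Γ(A) → B` -/

/-- The inductive step for edge terms: if `f` picks witnesses for `φ` and `f ∘ Γ(h)` restricts on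
each branch to a member of the prescribed set, then the edge conditions of `Ω(B)` apply to
`f ∘ Γ(h)`. -/
theorem comp_edge (Sc : σ.symb) (tq : τ.symb → Term σ)
    (x : ∀ R : τ.symb, Fin (τ.ar R) → (Fin (σ.ar Sc) → ((tq R).tree).dom))
    {A : Struct σ} {B : Struct τ} (φ : A.dom → OmEDom Sc tq x B)
    (hφ : IsHom A (OmegaE Sc tq x B) φ) (f : (GammaE Sc tq x A).dom → B.dom)
    (hf : ∀ e, IsWitness Sc tq x B (fun j => φ (e.1 j)) (f e))
    (S : σ.symb) (ts : Fin (σ.ar S) → VTerm σ) (hts : ts ∈ TEs tq S)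
    (h : (ETerm.tree S ts).dom → A.dom) (hh : IsHom (ETerm.tree S ts) A h)
    (ih : ∀ i, (fun e => f (gammaMap Sc tq x (fun v => h ⟨i, v⟩) (isHom_branch S ts h hh i) e)) ∈
      UextE Sc tq x B (φ (h (edgeRoot S ts i))) (ts i)) :
    (∀ i, VTerm.pr S i ts ∈ TVs tq → (fun e => f (gammaMap Sc tq x h hh e)) ∈
      UextE Sc tq x B (φ (h (edgeRoot S ts i))) (.pr S i ts)) ∧
    IsHom (GammaE Sc tq x (ETerm.tree S ts)) B (fun e => f (gammaMap Sc tq x h hh e)) := by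
  by_cases hS : S = Sc
  · subst hS
    have hw := hf (gammaMap S tq x h hh ⟨edgeRoot S ts, rootEdgeMem S ts⟩) ts hts
    exact ⟨fun i hi => hw.1 i hi _ ⟨ih, rfl⟩, hw.2 _ ⟨ih, rfl⟩⟩
  · have hE := (hφ S _ (hh S _ (rootEdgeMem S ts))).1 hS
    exact ⟨fun i hi => hE.1 ts hts i hi _ ih, hE.2 ts hts _ ih⟩

theorem mem_vsub_self (t : VTerm σ) : t ∈ t.vsub := by
  cases t with
  | vertex => exact rfl
  | pr R i ts => exact Or.inl rfl

theorem comp_mem (Sc : σ.symb) (tq : τ.symb → Term σ)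
    (x : ∀ R : τ.symb, Fin (τ.ar R) → (Fin (σ.ar Sc) → ((tq R).tree).dom))
    {A : Struct σ} {B : Struct τ} (φ : A.dom → OmEDom Sc tq x B)
    (hφ : IsHom A (OmegaE Sc tq x B) φ) (f : (GammaE Sc tq x A).dom → B.dom)
    (hf : ∀ e, IsWitness Sc tq x B (fun j => φ (e.1 j)) (f e)) (t : VTerm σ)
    (htV : t.vsub ⊆ TVs tq) (htE : ∀ S, t.esub S ⊆ TEs tq S)
    (h : t.domType → A.dom) (hh : IsHom t.tree A h) :
    (fun e => f (gammaMap Sc tq x h hh e)) ∈ UextE Sc tq x B (φ (h t.root)) t := by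
  induction t with
  | vertex =>
    have hv := htV (mem_vsub_self _)
    rw [UextE_of_mem Sc tq x B _ _ hv, (φ (h VTerm.vertex.root)).2.2 hv]
    trivial
  | pr S i ts ih =>
    refine (comp_edge Sc tq x φ hφ f hf S ts (htE S (Or.inl ⟨rfl, rfl⟩)) h hh fun j => ?_).1 i
      (htV (mem_vsub_self _))
    exact ih j (fun u hu => htV (Or.inr (Set.mem_iUnion.2 ⟨j, hu⟩)))
      (fun R u hu => htE R (Or.inr ⟨j, hu⟩)) _ (isHom_branch S ts h hh j)

theorem comp_isHom (Sc : σ.symb) (tq : τ.symb → Term σ)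
    (x : ∀ R : τ.symb, Fin (τ.ar R) → (Fin (σ.ar Sc) → ((tq R).tree).dom))
    {A : Struct σ} {B : Struct τ} (φ : A.dom → OmEDom Sc tq x B)
    (hφ : IsHom A (OmegaE Sc tq x B) φ) (f : (GammaE Sc tq x A).dom → B.dom)
    (hf : ∀ e, IsWitness Sc tq x B (fun j => φ (e.1 j)) (f e)) (T : Term σ)
    (hTV : T.vsub ⊆ TVs tq) (hTE : ∀ S, T.esub S ⊆ TEs tq S)
    (h : T.tree.dom → A.dom) (hh : IsHom T.tree A h) :
    IsHom (GammaE Sc tq x T.tree) B (fun e => f (gammaMap Sc tq x h hh e)) := by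
  rcases T with t | ⟨S, ts⟩
  · exact isHom_of_mem_UextE Sc tq x B _ t _ (comp_mem Sc tq x φ hφ f hf t hTV hTE h hh)
  · refine (comp_edge Sc tq x φ hφ f hf S ts (hTE S (Or.inl ⟨rfl, rfl⟩)) h hh fun j => ?_).2
    exact comp_mem Sc tq x φ hφ f hf (ts j) (fun u hu => hTV (Set.mem_iUnion.2 ⟨j, hu⟩))
      (fun R u hu => hTE R (Or.inr ⟨j, hu⟩)) _ (isHom_branch S ts h hh j)

/-- for the Pultr template with `P = Š₁` (a single `Š`-edge, `Š = Sc`) and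
trees `Q_R = T(tq R)` with selected `Š`-edges `x R i`, the functor `Ω` is a right adjoint to
the central Pultr functor `Γ`. -/
theorem omegaE_right_adjoint {σ τ : Signature} (Sc : σ.symb) (tq : τ.symb → Term σ)
    (x : ∀ R : τ.symb, Fin (τ.ar R) → (Fin (σ.ar Sc) → ((tq R).tree).dom))
    (hx : ∀ R i, x R i ∈ ((tq R).tree).rel Sc)
    (A : Struct σ) (B : Struct τ) :
    HomEx (GammaE Sc tq x A) B ↔ HomEx A (OmegaE Sc tq x B) := by
  constructor
  · rintro ⟨f, hf⟩
    exact ⟨omegaPoint Sc tq x f hf, isHom_omegaPoint Sc tq x f hf⟩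
  · rintro ⟨φ, hφ⟩
    have hw : ∀ e : (GammaE Sc tq x A).dom, ∃ b : B.dom,
        IsWitness Sc tq x B (fun j => φ (e.1 j)) b := fun e => (hφ Sc e.1 e.2).2 rfl
    choose f hf using hw
    refine ⟨f, ?_⟩
    rintro R y ⟨h, hh, hy⟩
    have hhom := comp_isHom Sc tq x φ hφ f hf (tq R) (Set.subset_iUnion (fun R => (tq R).vsub) R)
      (fun S => Set.subset_iUnion (fun R => (tq R).esub S) R) h hh
    -- The selected edges of `Q_R` are `R`-related in `Γ(Q_R)` through the identity of `Q_R`.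
    have hsel := hhom R (fun i => ⟨x R i, hx R i⟩) ⟨id, fun S z hz => hz, fun i => rfl⟩
    have hyx : y = fun i => gammaMap Sc tq x h hh ⟨x R i, hx R i⟩ :=
      funext fun i => Subtype.ext (hy i)
    rw [hyx]
    exact hsel
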